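/- For every n ∈ ℤ, the function t ↦ K_n^α(t,1) has a logarithmic singularity at t = 1: there exists a function G, real-analytic on [1/2, 3/2], such that the function t ↦ K_n^α(t,1) − G(t) · log|1−t|, defined for t ∈ [1/2, 3/2] with t ≠ 1, extends to a real-analytic function on [1/2, 3/2]. (Here K_n^α(t,1) is real-valued, by the symmetry θ ↦ −θ of the θ-integral.) -/

import Mathlib

open Real

/-- Parametrization of the infinite straight cone of opening angle `2α`. -/
noncomputable def coneParam (α t θ : ℝ) : EuclideanSpace ℝ (Fin 3) :=
  !₂[sin α * t * cos θ, sin α * t * sin θ, cos α * t]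

/-- Outward unit normal of the cone. -/
noncomputable def coneNormal (α θ : ℝ) : EuclideanSpace ℝ (Fin 3) :=
  !₂[cos α * cos θ, cos α * sin θ, -sin α]

/-- The layer-potential kernel of the infinite straight cone. -/
noncomputable def coneKernel (α t θ t' θ' : ℝ) : ℝ :=
  (inner ℝ (coneParam α t θ - coneParam α t' θ') (coneNormal α θ) : ℝ) /
    ‖coneParam α t' θ' - coneParam α t θ‖ ^ 3

/-- The `n`-th modal kernel `K_n^α(t,t') = (1/(2π)) ∫₀^{2π} e^{−inθ} K^{Γ_α}(t,θ,t',0) dθ`. -/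
noncomputable def modalKernel (α : ℝ) (n : ℤ) (t t' : ℝ) : ℂ :=
  ((1 / (2 * π) : ℝ) : ℂ) *
    ∫ θ in (0:ℝ)..(2 * π), Complex.exp (-Complex.I * (n : ℂ) * (θ : ℂ)) * (coneKernel α t θ t' 0 : ℂ)

open MeasureTheory in
lemma param_holo (g : ℂ → ℝ → ℂ) (w : ℝ → ℝ) (U : Set ℂ) (hU : IsOpen U) (a b : ℝ)
    (hg : ContinuousOn (Function.uncurry g) (U ×ˢ Set.univ))
    (hd : ∀ ψ, DifferentiableOn ℂ (fun z => g z ψ) U)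
    (hw : IntervalIntegrable w volume a b) :
    DifferentiableOn ℂ (fun z => ∫ ψ in a..b, g z ψ * (w ψ : ℂ)) U := by
  intro z₀ hz₀
  obtain ⟨r, hr, hrU⟩ := Metric.isOpen_iff.1 hU z₀ hz₀
  have hcb : Metric.closedBall z₀ (r/2) ⊆ U :=
    (Metric.closedBall_subset_ball (by linarith)).trans hrU
  have hcomp : IsCompact (Metric.closedBall z₀ (r/2) ×ˢ Set.uIcc a b) :=
    (isCompact_closedBall _ _).prod isCompact_uIcc
  obtain ⟨C, hC⟩ := hcomp.exists_bound_of_continuousOn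
    (hg.mono (Set.prod_mono hcb (Set.subset_univ _)))
  have hcont : ∀ z ∈ U, Continuous (g z) := by
    intro z hz
    have := hg.comp_continuous (f := fun ψ : ℝ => (z, ψ)) (by fun_prop) (fun ψ => ⟨hz, trivial⟩)
    exact this
  have hwc : IntervalIntegrable (fun ψ => (w ψ : ℂ)) volume a b := ⟨hw.1.ofReal, hw.2.ofReal⟩
  have hwm : AEStronglyMeasurable (fun ψ => (w ψ : ℂ)) (volume.restrict (Set.uIoc a b)) :=
    (intervalIntegrable_iff.1 hwc).aestronglyMeasurable
  have hder : ∀ ψ, ∀ z ∈ U, HasDerivAt (fun z => g z ψ) (deriv (fun z => g z ψ) z) z :=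
    fun ψ z hz => ((hd ψ).differentiableAt (hU.mem_nhds hz)).hasDerivAt
  have key := intervalIntegral.hasDerivAt_integral_of_dominated_loc_of_deriv_le (𝕜 := ℂ)
    (μ := volume) (a := a) (b := b)
    (F := fun z ψ => g z ψ * (w ψ : ℂ))
    (F' := fun z ψ => deriv (fun z => g z ψ) z * (w ψ : ℂ)) (x₀ := z₀)
    (s := Metric.ball z₀ (r/4)) (bound := fun ψ => C / (r/4) * ‖(w ψ : ℂ)‖)
    (Metric.ball_mem_nhds _ (by linarith)) ?_ ?_ ?_ ?_ ?_ ?_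
  · exact key.2.differentiableAt.differentiableWithinAt
  · filter_upwards [hU.mem_nhds hz₀] with z hz
    exact (hcont z hz).aestronglyMeasurable.mul hwm
  · exact hwc.continuousOn_mul (hcont z₀ hz₀).continuousOn
  · refine AEStronglyMeasurable.mul ?_ hwm
    have hu : ∀ n : ℕ, z₀ + ((r/2/(n+1) : ℝ) : ℂ) ∈ U := by
      intro n
      apply hcb
      simp only [Metric.mem_closedBall, dist_eq_norm, add_sub_cancel_left, Complex.norm_real]
      rw [Real.norm_of_nonneg (by positivity)]
      apply div_le_self (by linarith)
      have : (0:ℝ) ≤ n := by positivity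
      linarith
    refine aestronglyMeasurable_of_tendsto_ae Filter.atTop
      (f := fun (n : ℕ) ψ => ((r/2/(n+1) : ℝ) : ℂ)⁻¹ • (g (z₀ + ((r/2/(n+1) : ℝ) : ℂ)) ψ - g z₀ ψ)) ?_ ?_
    · intro n
      have h := (((hcont _ (hu n)).sub (hcont _ hz₀)).const_smul
        (((r/2/(n+1) : ℝ) : ℂ)⁻¹))
      exact h.aestronglyMeasurable
    · refine Filter.Eventually.of_forall fun ψ => ?_
      have := (hder ψ z₀ hz₀).tendsto_slope_zero
      refine this.comp (tendsto_nhdsWithin_iff.2 ⟨?_, ?_⟩)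
      · have h1 : Filter.Tendsto (fun n : ℕ => r/2/((n:ℝ)+1)) Filter.atTop (nhds 0) := by
          have := (tendsto_one_div_add_atTop_nhds_zero_nat (𝕜 := ℝ)).const_mul (r/2)
          simpa [div_eq_mul_inv] using this
        have := (Complex.continuous_ofReal.tendsto 0).comp h1
        rw [Complex.ofReal_zero] at this
        exact this
      · refine Filter.Eventually.of_forall fun n => ?_
        have : r/2/((n:ℝ)+1) ≠ 0 := by positivity
        exact Complex.ofReal_ne_zero.2 this
  · refine Filter.Eventually.of_forall fun ψ hψ z hz => ?_
    rw [norm_mul]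
    gcongr
    have hsub : Metric.closedBall z (r/4) ⊆ Metric.closedBall z₀ (r/2) := by
      apply Metric.closedBall_subset_closedBall'
      have := Metric.mem_ball.1 hz
      linarith
    apply Complex.norm_deriv_le_of_forall_mem_sphere_norm_le (by linarith)
    · apply DifferentiableOn.diffContOnCl
      rw [closure_ball _ (by linarith)]
      exact (hd ψ).mono (hsub.trans hcb)
    · intro x hx
      exact hC (x, ψ) ⟨hsub (Metric.sphere_subset_closedBall hx), Set.uIoc_subset_uIcc hψ⟩
  · exact hwc.norm.const_mul _
  · refine Filter.Eventually.of_forall fun ψ hψ z hz => ?_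
    have hzU : z ∈ U := hcb (Metric.closedBall_subset_closedBall (by linarith) (Metric.ball_subset_closedBall hz))
    exact (hder ψ z hzU).mul_const _
noncomputable def csq (w : ℂ) : ℂ := Complex.exp (Complex.log w / 2)

lemma csq_re_pos {w : ℂ} (hw : 0 < w.re) : 0 < (csq w).re := by
  unfold csq
  rw [Complex.exp_re]
  apply mul_pos (Real.exp_pos _)
  have h : (Complex.log w / 2).im = w.arg / 2 := by
    rw [show (2:ℂ) = ((2:ℝ):ℂ) by simp, Complex.div_ofReal_im, Complex.log_im]
  rw [h]
  have h1 := Complex.abs_arg_lt_pi_div_two_iff.2 (Or.inl hw)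
  have h2 := abs_lt.1 h1
  apply Real.cos_pos_of_mem_Ioo
  constructor <;> linarith [Real.pi_pos]

lemma csq_ofReal {x : ℝ} (hx : 0 < x) : csq (x : ℂ) = ((√x : ℝ) : ℂ) := by
  unfold csq
  rw [← Complex.ofReal_log hx.le, show (2:ℂ) = ((2:ℝ):ℂ) by simp, ← Complex.ofReal_div,
    ← Complex.ofReal_exp]
  congr 1
  rw [Real.sqrt_eq_rpow, Real.rpow_def_of_pos hx]
  ring_nf

def HU : Set ℂ := {z | -1 < z.re}
lemma HU_open : IsOpen HU := isOpen_lt continuous_const Complex.continuous_re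

lemma HU_re {z : ℂ} (hz : z ∈ HU) (ψ : ℝ) : 0 < (1 + ((sin ψ ^ 2 : ℝ) : ℂ) * z).re := by
  have : -1 < z.re := hz
  simp only [Complex.add_re, Complex.one_re, Complex.re_ofReal_mul]
  have h1 := sin_sq_le_one ψ
  have h2 := sq_nonneg (sin ψ)
  rcases le_or_gt 0 z.re with h | h
  · positivity
  · nlinarith

noncomputable def g1 (z : ℂ) (ψ : ℝ) : ℂ := (csq (1 + ((sin ψ ^ 2 : ℝ) : ℂ) * z))⁻¹
noncomputable def g2 (z : ℂ) (ψ : ℝ) : ℂ := g1 z ψ *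
  Complex.log (csq (1 + z) + csq (1 + ((sin ψ ^ 2 : ℝ) : ℂ) * z))

lemma csq_ne {w : ℂ} : csq w ≠ 0 := Complex.exp_ne_zero _

lemma csq_cont {X : Type*} [TopologicalSpace X] {f : X → ℂ} {s : Set X} (hf : ContinuousOn f s)
    (h : ∀ x ∈ s, 0 < (f x).re) : ContinuousOn (fun x => csq (f x)) s := by
  unfold csq
  exact Complex.continuous_exp.comp_continuousOn
    ((hf.clog fun x hx => Or.inl (h x hx)).div_const _)

lemma csq_diff {f : ℂ → ℂ} {s : Set ℂ} (hf : DifferentiableOn ℂ f s)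
    (h : ∀ x ∈ s, 0 < (f x).re) : DifferentiableOn ℂ (fun x => csq (f x)) s := by
  unfold csq
  exact ((hf.clog fun x hx => Or.inl (h x hx)).div_const _).cexp

lemma one_re {z : ℂ} (hz : z ∈ HU) : 0 < (1 + z).re := by
  have : -1 < z.re := hz
  simp; linarith

lemma sum_re {z : ℂ} (hz : z ∈ HU) (ψ : ℝ) :
    0 < (csq (1 + z) + csq (1 + ((sin ψ ^ 2 : ℝ) : ℂ) * z)).re := by
  rw [Complex.add_re]
  exact add_pos (csq_re_pos (one_re hz)) (csq_re_pos (HU_re hz ψ))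

lemma q_cont : ContinuousOn (fun p : ℂ × ℝ => csq (1 + ((sin p.2 ^ 2 : ℝ) : ℂ) * p.1)) (HU ×ˢ Set.univ) := by
  apply csq_cont
  · fun_prop
  · intro p hp
    exact HU_re hp.1 _

lemma g1_cont : ContinuousOn (Function.uncurry g1) (HU ×ˢ Set.univ) := by
  have := q_cont.inv₀ (fun _ _ => csq_ne)
  exact this

lemma g2_cont : ContinuousOn (Function.uncurry g2) (HU ×ˢ Set.univ) := by
  have h1 : ContinuousOn (fun p : ℂ × ℝ => csq (1 + p.1)) (HU ×ˢ Set.univ) := by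
    apply csq_cont
    · fun_prop
    · intro p hp
      exact one_re hp.1
  exact g1_cont.mul ((h1.add q_cont).clog fun p hp => Or.inl (sum_re hp.1 p.2))

lemma q_diff (ψ : ℝ) : DifferentiableOn ℂ (fun z => csq (1 + ((sin ψ ^ 2 : ℝ) : ℂ) * z)) HU := by
  apply csq_diff
  · fun_prop
  · intro z hz
    exact HU_re hz ψ

lemma g1_diff (ψ : ℝ) : DifferentiableOn ℂ (fun z => g1 z ψ) HU :=
  (q_diff ψ).inv (fun _ _ => csq_ne)

lemma g2_diff (ψ : ℝ) : DifferentiableOn ℂ (fun z => g2 z ψ) HU := by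
  have h1 : DifferentiableOn ℂ (fun z => csq (1 + z)) HU := by
    apply csq_diff
    · fun_prop
    · intro p hp
      exact one_re hp
  exact (g1_diff ψ).mul ((h1.add (q_diff ψ)).clog fun z hz => Or.inl (sum_re hz ψ))

lemma g1_real {x : ℝ} (hx : 0 ≤ x) (ψ : ℝ) :
    g1 x ψ = (((√(1 + sin ψ ^ 2 * x))⁻¹ : ℝ) : ℂ) := by
  unfold g1
  rw [Complex.ofReal_inv, ← csq_ofReal (by positivity)]
  push_cast
  rfl

lemma g2_real {x : ℝ} (hx : 0 ≤ x) (ψ : ℝ) :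
    g2 x ψ = (((√(1 + sin ψ ^ 2 * x))⁻¹ * log (√(1 + x) + √(1 + sin ψ ^ 2 * x)) : ℝ) : ℂ) := by
  unfold g2
  rw [g1_real hx, Complex.ofReal_mul, Complex.ofReal_log (by positivity), Complex.ofReal_add,
    ← csq_ofReal (x := 1 + x) (by positivity), ← csq_ofReal (x := 1 + sin ψ ^ 2 * x) (by positivity)]
  push_cast
  rfl

lemma re_analytic {f : ℂ → ℂ} (hf : DifferentiableOn ℂ f HU) :
    AnalyticOnNhd ℝ (fun x : ℝ => (f x).re) (Set.Ici 0) := by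
  intro x hx
  have hx' : (0:ℝ) ≤ x := hx
  have : AnalyticAt ℂ f (x : ℂ) := hf.analyticAt (HU_open.mem_nhds (by
    show -1 < (x:ℂ).re
    simp; linarith))
  exact this.re_ofReal
lemma psi_int {a : ℝ} (ha : 0 < a) :
    ∫ ψ in (0:ℝ)..(π/2), (cos ψ ^ 2 + a ^ 2 * sin ψ ^ 2)⁻¹ = π / (2 * a) := by
  have hD : ∀ ψ, 0 < cos ψ ^ 2 + a * sin ψ ^ 2 := by
    intro ψ
    have := sin_sq_add_cos_sq ψ
    rcases eq_or_ne (sin ψ) 0 with h | h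
    · rw [h] at this ⊢; nlinarith
    · positivity
  have hE : ∀ ψ, 0 < cos ψ ^ 2 + a ^ 2 * sin ψ ^ 2 := by
    intro ψ
    have := sin_sq_add_cos_sq ψ
    rcases eq_or_ne (sin ψ) 0 with h | h
    · rw [h] at this ⊢; nlinarith
    · positivity
  have hder : ∀ ψ ∈ Set.uIcc (0:ℝ) (π/2), HasDerivAt
      (fun ψ => (ψ - arctan ((1 - a) * sin ψ * cos ψ / (cos ψ ^ 2 + a * sin ψ ^ 2))) / a)
      ((cos ψ ^ 2 + a ^ 2 * sin ψ ^ 2)⁻¹) ψ := by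
    intro ψ _
    have hs := hasDerivAt_sin ψ
    have hc := hasDerivAt_cos ψ
    have hn := ((hs.const_mul (1 - a)).mul hc).div ((hc.pow 2).add ((hs.pow 2).const_mul a)) (hD ψ).ne'
    have h := ((hasDerivAt_id ψ).sub hn.arctan).div_const a
    refine h.congr_deriv ?_
    have h1 := (hD ψ).ne'
    have h2 := (hE ψ).ne'
    have h3 : 0 < 1 + ((1 - a) * sin ψ * cos ψ / (cos ψ ^ 2 + a * sin ψ ^ 2)) ^ 2 := by positivity
    have hE2 : (cos ψ ^ 2 + a * sin ψ ^ 2) ^ 2 + ((1 - a) * sin ψ * cos ψ) ^ 2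
        = cos ψ ^ 2 + a ^ 2 * sin ψ ^ 2 := by
      have := sin_sq_add_cos_sq ψ
      have h5 : sin ψ ^ 2 = 1 - cos ψ ^ 2 := by linarith
      rw [mul_pow, mul_pow, h5]; ring
    have h4 : 1 + ((1 - a) * sin ψ * cos ψ / (cos ψ ^ 2 + a * sin ψ ^ 2)) ^ 2
        = (cos ψ ^ 2 + a ^ 2 * sin ψ ^ 2) / (cos ψ ^ 2 + a * sin ψ ^ 2) ^ 2 := by
      rw [← hE2]; field_simp
    simp only [Pi.mul_apply, Pi.add_apply, Pi.pow_apply, Pi.div_apply]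
    rw [h4]
    field_simp
    have h5 : sin ψ ^ 2 = 1 - cos ψ ^ 2 := by linarith [sin_sq_add_cos_sq ψ]
    have h6 : sin ψ ^ 4 = (1 - cos ψ ^ 2)^2 := by rw [← h5]; ring
    ring_nf
    rw [h6, h5]
    ring
  rw [intervalIntegral.integral_eq_sub_of_hasDerivAt hder]
  · simp; field_simp
  · apply Continuous.intervalIntegrable
    exact Continuous.inv₀ (by fun_prop) (fun ψ => (hE ψ).ne')

lemma phi_int {z s : ℝ} (hz : 0 < z) (hs0 : 0 ≤ s) (hs : s < 1) :
    ∫ φ in (0:ℝ)..(π/2), cos φ / (√(z + sin φ ^ 2) * (1 - s * sin φ ^ 2)) =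
    (√(1 + s * z))⁻¹ * (log (√(1 + z) + √(1 + s * z)) - log z / 2 - log (1 - s) / 2) := by
  set q := √(1 + s * z) with hq
  have hq0 : 0 < q := by positivity
  have hq2 : q ^ 2 = 1 + s * z := sq_sqrt (by positivity)
  have hE : ∀ φ, 0 < 1 - s * sin φ ^ 2 := by
    intro φ
    nlinarith [sin_sq_le_one φ, sq_nonneg (sin φ)]
  have hΔ : ∀ φ, 0 < √(z + sin φ ^ 2) := fun φ => by positivity
  have hΔ2 : ∀ φ, √(z + sin φ ^ 2) ^ 2 = z + sin φ ^ 2 := fun φ => sq_sqrt (by positivity)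
  have hprod : ∀ φ, (√(z + sin φ ^ 2) + q * sin φ) * (√(z + sin φ ^ 2) - q * sin φ)
      = z * (1 - s * sin φ ^ 2) := by
    intro φ
    have : (√(z + sin φ ^ 2) + q * sin φ) * (√(z + sin φ ^ 2) - q * sin φ)
      = √(z + sin φ ^ 2) ^ 2 - q ^ 2 * sin φ ^ 2 := by ring
    rw [this, hΔ2, hq2]; ring
  have habs : ∀ φ, |q * sin φ| < √(z + sin φ ^ 2) := by
    intro φ
    apply abs_lt_of_sq_lt_sq _ (hΔ φ).le
    rw [hΔ2, mul_pow, hq2]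
    nlinarith [mul_pos hz (hE φ)]
  have hp : ∀ φ, 0 < √(z + sin φ ^ 2) + q * sin φ := fun φ => by linarith [(abs_lt.1 (habs φ)).1]
  have hm : ∀ φ, 0 < √(z + sin φ ^ 2) - q * sin φ := fun φ => by linarith [(abs_lt.1 (habs φ)).2]
  have hder : ∀ φ ∈ Set.uIcc (0:ℝ) (π/2), HasDerivAt
      (fun φ => (log (√(z + sin φ ^ 2) + q * sin φ) - log (√(z + sin φ ^ 2) - q * sin φ)) / (2 * q))
      (cos φ / (√(z + sin φ ^ 2) * (1 - s * sin φ ^ 2))) φ := by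
    intro φ _
    have h1 := hasDerivAt_sin φ
    have h2 := ((h1.pow 2).const_add z).sqrt (by positivity : z + sin φ ^ 2 ≠ 0)
    have h3 := (((h2.add (h1.const_mul q)).log (hp φ).ne').sub
      ((h2.sub (h1.const_mul q)).log (hm φ).ne')).div_const (2 * q)
    refine h3.congr_deriv ?_
    have e1 := (hp φ).ne'
    have e2 := (hm φ).ne'
    have e3 := (hΔ φ).ne'
    have e4 := (hE φ).ne'
    have e5 := hΔ2 φ
    have e6 := hprod φ
    have e7 : 1 - s * sin φ ^ 2 = (√(z + sin φ ^ 2) + q * sin φ) * (√(z + sin φ ^ 2) - q * sin φ) / z := by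
      rw [e6]; field_simp
    simp only [Pi.pow_apply, Pi.add_apply, Pi.sub_apply]
    rw [e7]
    generalize √(z + sin φ ^ 2) = Δ at *
    field_simp
    simp only [Nat.cast_ofNat]
    have e8 : z = Δ ^ 2 - sin φ ^ 2 := by linarith
    rw [e8]
    ring
  rw [intervalIntegral.integral_eq_sub_of_hasDerivAt hder]
  · have h1 := hm (π/2)
    have h2 := hp (π/2)
    have h3 := hprod (π/2)
    simp only [sin_pi_div_two, one_pow, mul_one, sin_zero] at *
    have h4 : √(z + 1) - q = z * (1 - s) / (√(z + 1) + q) := by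
      rw [← h3]; field_simp
    rw [h4, log_div (by have : 0 < 1 - s := by linarith
                        positivity) h2.ne', log_mul hz.ne' (by linarith), add_comm z 1]
    field_simp
    simp
    ring
  · apply Continuous.intervalIntegrable
    refine Continuous.div (by fun_prop) (by fun_prop) (fun φ => (mul_pos (hΔ φ) (hE φ)).ne')
lemma I0_formula {z : ℝ} (hz : 0 < z) :
    ∫ φ in (0:ℝ)..(π/2), (√(z + sin φ ^ 2))⁻¹ = (2 / π) *
    ∫ ψ in (0:ℝ)..(π/2), (√(1 + sin ψ ^ 2 * z))⁻¹ *
      (log (√(1 + z) + √(1 + sin ψ ^ 2 * z)) - log z / 2 - log (cos ψ)) := by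
  have hpi := pi_pos
  have hle : (0:ℝ) ≤ π/2 := by linarith
  simp only [intervalIntegral.integral_of_le hle, MeasureTheory.integral_Ioc_eq_integral_Ioo]
  set μ : MeasureTheory.Measure ℝ := MeasureTheory.volume.restrict (Set.Ioo (0:ℝ) (π/2)) with hμ
  set F : ℝ → ℝ → ℝ := fun φ ψ => cos φ / (√(z + sin φ ^ 2) * (1 - sin ψ ^ 2 * sin φ ^ 2)) with hF
  have hmem : ∀ᵐ φ ∂μ, φ ∈ Set.Ioo (0:ℝ) (π/2) := MeasureTheory.ae_restrict_mem measurableSet_Ioo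
  have hcos : ∀ φ ∈ Set.Ioo (0:ℝ) (π/2), 0 < cos φ := fun φ hφ =>
    cos_pos_of_mem_Ioo ⟨by linarith [hφ.1], hφ.2⟩
  have hsin : ∀ φ ∈ Set.Ioo (0:ℝ) (π/2), sin φ ^ 2 < 1 := fun φ hφ => by
    have := hcos φ hφ
    nlinarith [sin_sq_add_cos_sq φ]
  have hpos : ∀ φ ∈ Set.Ioo (0:ℝ) (π/2), ∀ ψ, 0 < 1 - sin ψ ^ 2 * sin φ ^ 2 := fun φ hφ ψ => by
    nlinarith [hsin φ hφ, sin_sq_le_one ψ, sq_nonneg (sin ψ), sq_nonneg (sin φ)]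
  have hΔ : ∀ φ, 0 < √(z + sin φ ^ 2) := fun φ => by positivity
  have hFnn : ∀ φ ∈ Set.Ioo (0:ℝ) (π/2), ∀ ψ, ‖F φ ψ‖ = F φ ψ := fun φ hφ ψ => by
    apply Real.norm_of_nonneg
    have h1 := hcos φ hφ
    have h2 := hpos φ hφ ψ
    have h3 := hΔ φ
    simp only [hF]
    positivity
  have hinner : ∀ φ ∈ Set.Ioo (0:ℝ) (π/2), ∫ ψ, F φ ψ ∂μ = π / 2 * (√(z + sin φ ^ 2))⁻¹ := by
    intro φ hφ
    have h1 := hcos φ hφ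
    have h2 := hΔ φ
    rw [hμ, ← MeasureTheory.integral_Ioc_eq_integral_Ioo, ← intervalIntegral.integral_of_le hle]
    have : ∀ ψ, F φ ψ = cos φ / √(z + sin φ ^ 2) * (cos ψ ^ 2 + cos φ ^ 2 * sin ψ ^ 2)⁻¹ := by
      intro ψ
      simp only [hF]
      rw [div_mul_eq_div_div, div_eq_mul_inv (cos φ / _)]
      congr 2
      rw [cos_sq', cos_sq']; ring
    simp only [this]
    rw [intervalIntegral.integral_const_mul, psi_int h1]
    field_simp
  have hint : MeasureTheory.Integrable (Function.uncurry F) (μ.prod μ) := by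
    rw [MeasureTheory.integrable_prod_iff]
    · constructor
      · filter_upwards [hmem] with φ hφ
        have : Continuous (fun ψ => F φ ψ) := by
          refine Continuous.div (by fun_prop) (by fun_prop)
            (fun ψ => (mul_pos (hΔ φ) (hpos φ hφ ψ)).ne')
        exact (this.integrableOn_Icc (a := 0) (b := π/2)).mono_set Set.Ioo_subset_Icc_self
      · have h1 : MeasureTheory.Integrable (fun φ => π / 2 * (√(z + sin φ ^ 2))⁻¹) μ := by
          have : Continuous (fun φ => π / 2 * (√(z + sin φ ^ 2))⁻¹) := by
            refine Continuous.mul (by fun_prop) (Continuous.inv₀ (by fun_prop) (fun φ => (hΔ φ).ne'))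
          exact (this.integrableOn_Icc (a := 0) (b := π/2)).mono_set Set.Ioo_subset_Icc_self
        refine h1.congr ?_
        filter_upwards [hmem] with φ hφ
        rw [← hinner φ hφ]
        refine MeasureTheory.integral_congr_ae (Filter.Eventually.of_forall fun ψ => ?_)
        exact (hFnn φ hφ ψ).symm
    · apply Measurable.aestronglyMeasurable
      simp only [hF, Function.uncurry_def]
      fun_prop
  have hswap := MeasureTheory.integral_integral_swap hint
  have hL : ∫ φ, ∫ ψ, F φ ψ ∂μ ∂μ = π / 2 * ∫ φ, (√(z + sin φ ^ 2))⁻¹ ∂μ := by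
    rw [← MeasureTheory.integral_const_mul]
    refine MeasureTheory.integral_congr_ae ?_
    filter_upwards [hmem] with φ hφ
    exact hinner φ hφ
  have hR : ∫ ψ, ∫ φ, F φ ψ ∂μ ∂μ = ∫ ψ, (√(1 + sin ψ ^ 2 * z))⁻¹ *
      (log (√(1 + z) + √(1 + sin ψ ^ 2 * z)) - log z / 2 - log (cos ψ)) ∂μ := by
    refine MeasureTheory.integral_congr_ae ?_
    filter_upwards [hmem] with ψ hψ
    have := phi_int hz (sq_nonneg (sin ψ)) (hsin ψ hψ)
    rw [intervalIntegral.integral_of_le hle, MeasureTheory.integral_Ioc_eq_integral_Ioo] at this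
    rw [hμ]
    simp only [hF]
    rw [this, ← cos_sq', log_pow]
    push_cast
    ring_nf
  rw [← hR, ← hswap, hL]
  field_simp

def LC (f : ℝ → ℝ) : Prop := ∃ A B : ℝ → ℝ, AnalyticOnNhd ℝ A (Set.Ici 0) ∧
  AnalyticOnNhd ℝ B (Set.Ici 0) ∧ ∀ z, 0 < z → f z = A z * log z + B z

noncomputable def Ik (k : ℕ) (z : ℝ) : ℝ := ∫ φ in (0:ℝ)..(π/2), sin φ ^ (2 * k) / √(z + sin φ ^ 2)

lemma LC_I0 : LC (Ik 0) := by
  have hw1 : IntervalIntegrable (fun _ : ℝ => (1:ℝ)) MeasureTheory.volume 0 (π/2) := by simp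
  have hw2 : IntervalIntegrable (fun ψ => log (cos ψ)) MeasureTheory.volume 0 (π/2) :=
    intervalIntegrable_log_cos
  have hA := re_analytic (param_holo g1 _ HU HU_open 0 (π/2) g1_cont g1_diff hw1)
  have hB := re_analytic (param_holo g2 _ HU HU_open 0 (π/2) g2_cont g2_diff hw1)
  have hC := re_analytic (param_holo g1 _ HU HU_open 0 (π/2) g1_cont g1_diff hw2)
  refine ⟨_, _, (analyticOnNhd_const (v := -(1/π))).mul hA,
    (analyticOnNhd_const (v := (2/π))).mul (hB.sub hC), ?_⟩
  intro z hz
  have e : ∀ (g : ℝ → ℂ) (h w : ℝ → ℝ), (∀ ψ, g ψ = (h ψ : ℂ)) →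
      (∫ ψ in (0:ℝ)..(π/2), g ψ * (w ψ : ℂ)).re = ∫ ψ in (0:ℝ)..(π/2), h ψ * w ψ := by
    intro g h w hg
    simp only [hg, ← Complex.ofReal_mul]
    rw [intervalIntegral.integral_ofReal, Complex.ofReal_re]
  simp only [Pi.mul_apply, Pi.sub_apply]
  rw [e _ _ _ (g1_real hz.le), e _ _ _ (g1_real hz.le), e _ _ _ (g2_real hz.le)]
  have h0 : Ik 0 z = ∫ φ in (0:ℝ)..(π/2), (√(z + sin φ ^ 2))⁻¹ := by
    simp [Ik]
  rw [h0, I0_formula hz]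
  have c1 : Continuous (fun ψ => (√(1 + sin ψ ^ 2 * z))⁻¹) :=
    Continuous.inv₀ (by fun_prop) (fun φ => by positivity)
  have c2 : Continuous (fun ψ => (√(1 + sin ψ ^ 2 * z))⁻¹ * log (√(1 + z) + √(1 + sin ψ ^ 2 * z))) :=
    c1.mul (Continuous.log (by fun_prop) (fun φ => by positivity))
  have i1 := (c1.intervalIntegrable (μ := MeasureTheory.volume) 0 (π/2))
  have i2 := (c2.intervalIntegrable (μ := MeasureTheory.volume) 0 (π/2))
  have i3 := hw2.continuousOn_mul (c1.continuousOn (s := Set.uIcc 0 (π/2)))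
  have : ∀ ψ, (√(1 + sin ψ ^ 2 * z))⁻¹ *
      (log (√(1 + z) + √(1 + sin ψ ^ 2 * z)) - log z / 2 - log (cos ψ)) =
      (√(1 + sin ψ ^ 2 * z))⁻¹ * log (√(1 + z) + √(1 + sin ψ ^ 2 * z))
       - (√(1 + sin ψ ^ 2 * z))⁻¹ * (log z / 2) - (√(1 + sin ψ ^ 2 * z))⁻¹ * log (cos ψ) := by
    intro ψ; ring
  simp only [this]
  rw [intervalIntegral.integral_sub (i2.sub (i1.mul_const _)) i3,
    intervalIntegral.integral_sub i2 (i1.mul_const _), intervalIntegral.integral_mul_const]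
  simp only [mul_one]
  ring
lemma LC.add {f g : ℝ → ℝ} (hf : LC f) (hg : LC g) : LC (fun z => f z + g z) := by
  obtain ⟨A, B, hA, hB, h⟩ := hf
  obtain ⟨A', B', hA', hB', h'⟩ := hg
  refine ⟨_, _, hA.add hA', hB.add hB', fun z hz => ?_⟩
  simp only [Pi.add_apply, h z hz, h' z hz]
  ring

lemma LC.amul {f g : ℝ → ℝ} (hf : LC f) (hg : AnalyticOnNhd ℝ g (Set.Ici 0)) :
    LC (fun z => g z * f z) := by
  obtain ⟨A, B, hA, hB, h⟩ := hf
  refine ⟨_, _, hg.mul hA, hg.mul hB, fun z hz => ?_⟩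
  simp only [Pi.mul_apply, h z hz]
  ring

lemma LC.congr {f g : ℝ → ℝ} (hf : LC f) (h : ∀ z, 0 < z → g z = f z) : LC g := by
  obtain ⟨A, B, hA, hB, h'⟩ := hf
  exact ⟨A, B, hA, hB, fun z hz => by rw [h z hz, h' z hz]⟩

lemma LC.zderiv {f : ℝ → ℝ} (hf : LC f) : LC (fun z => z * deriv f z) := by
  obtain ⟨A, B, hA, hB, h⟩ := hf
  refine ⟨_, _, analyticOnNhd_id.mul hA.deriv, hA.add (analyticOnNhd_id.mul hB.deriv), fun z hz => ?_⟩
  have h1 : f =ᶠ[nhds z] fun z => A z * log z + B z := by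
    filter_upwards [Ioi_mem_nhds hz] with x hx using h x hx
  have h2 := (((hA z hz.le).differentiableAt.hasDerivAt.mul (hasDerivAt_log hz.ne')).add
    (hB z hz.le).differentiableAt.hasDerivAt)
  have h3 : deriv f z = _ := (h2.congr_of_eventuallyEq h1).deriv
  simp only [h3, Pi.add_apply]
  field_simp
  ring

lemma D_pos {z : ℝ} (hz : 0 < z) (φ : ℝ) : 0 < √(z + sin φ ^ 2) := by positivity
lemma D_sq {z : ℝ} (hz : 0 < z) (φ : ℝ) : √(z + sin φ ^ 2) ^ 2 = z + sin φ ^ 2 :=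
  sq_sqrt (by positivity)

lemma D_cont (z : ℝ) : Continuous (fun φ => √(z + sin φ ^ 2)) := by fun_prop

lemma D_der {z : ℝ} (hz : 0 < z) (φ : ℝ) :
    HasDerivAt (fun φ => √(z + sin φ ^ 2)) (sin φ * cos φ / √(z + sin φ ^ 2)) φ := by
  have h2 := (((hasDerivAt_sin φ).pow 2).const_add z).sqrt (by positivity : z + sin φ ^ 2 ≠ 0)
  refine h2.congr_deriv ?_
  have := D_pos hz φ
  simp only [Pi.pow_apply, Nat.cast_ofNat]
  field_simp
  ring

open MeasureTheory in
lemma I0_deriv {z : ℝ} (hz : 0 < z) :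
    deriv (Ik 0) z = -(1/2) * ∫ φ in (0:ℝ)..(π/2), (√(z + sin φ ^ 2) ^ 3)⁻¹ := by
  have key := intervalIntegral.hasDerivAt_integral_of_dominated_loc_of_deriv_le (𝕜 := ℝ)
    (μ := volume) (a := 0) (b := π/2)
    (F := fun z φ => sin φ ^ (2 * 0) / √(z + sin φ ^ 2))
    (F' := fun z φ => -(1/2) * (√(z + sin φ ^ 2) ^ 3)⁻¹) (x₀ := z)
    (s := Set.Ioi (z/2)) (bound := fun φ => (1/2) * (√(z/2) ^ 3)⁻¹)
    (Ioi_mem_nhds (by linarith)) ?_ ?_ ?_ ?_ ?_ ?_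
  · rw [← intervalIntegral.integral_const_mul]
    exact key.2.deriv
  · refine Filter.Eventually.of_forall fun x => ?_
    apply Measurable.aestronglyMeasurable
    fun_prop
  · apply Continuous.intervalIntegrable
    exact Continuous.div (by fun_prop) (by fun_prop) (fun φ => (D_pos hz φ).ne')
  · apply Measurable.aestronglyMeasurable
    fun_prop
  · refine Filter.Eventually.of_forall fun φ _ x hx => ?_
    have hx' : z/2 < x := hx
    rw [norm_mul, norm_neg, Real.norm_of_nonneg (by norm_num : (0:ℝ) ≤ 1/2), Real.norm_of_nonneg (by positivity)]
    gcongr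
    nlinarith [sq_nonneg (sin φ)]
  · simp
  · refine Filter.Eventually.of_forall fun φ _ x hx => ?_
    have hx' : z/2 < x := hx
    have hx0 : 0 < x := by linarith
    have h1 := ((hasDerivAt_id x).add_const (sin φ ^ 2)).sqrt (by simp only [id]; positivity)
    have h2 := h1.inv (by simp only [id]; positivity)
    simp only [mul_zero, pow_zero, one_div]
    refine h2.congr_deriv ?_
    simp only [id]
    have := D_pos hx0 φ
    field_simp

lemma int_zero {f f' : ℝ → ℝ} (hd : ∀ φ, HasDerivAt f (f' φ) φ) (hc : Continuous f')
    (h0 : f 0 = 0) (h1 : f (π/2) = 0) : ∫ φ in (0:ℝ)..(π/2), f' φ = 0 := by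
  rw [intervalIntegral.integral_eq_sub_of_hasDerivAt (fun φ _ => hd φ) (hc.intervalIntegrable _ _), h0, h1, sub_zero]

lemma Ik_cont (k : ℕ) {z : ℝ} (hz : 0 < z) : Continuous (fun φ => sin φ ^ (2 * k) / √(z + sin φ ^ 2)) :=
  Continuous.div (by fun_prop) (by fun_prop) (fun φ => (D_pos hz φ).ne')

lemma N3_cont {z : ℝ} (hz : 0 < z) : Continuous (fun φ => (√(z + sin φ ^ 2) ^ 3)⁻¹) :=
  Continuous.inv₀ (by fun_prop) (fun φ => by have := D_pos hz φ; positivity)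

lemma I1_eq {z : ℝ} (hz : 0 < z) :
    z * Ik 0 z + Ik 1 z = z * (1 + z) * ∫ φ in (0:ℝ)..(π/2), (√(z + sin φ ^ 2) ^ 3)⁻¹ := by
  have c0 := Ik_cont 0 hz
  have c1 := Ik_cont 1 hz
  have c3 := N3_cont hz
  have key := int_zero (f := fun φ => sin φ * cos φ / √(z + sin φ ^ 2))
    (f' := fun φ => z * (1 + z) * (√(z + sin φ ^ 2) ^ 3)⁻¹ - (z * (sin φ ^ (2 * 0) / √(z + sin φ ^ 2))
      + sin φ ^ (2 * 1) / √(z + sin φ ^ 2))) ?_ (by fun_prop) (by simp) (by simp)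
  · rw [intervalIntegral.integral_sub, intervalIntegral.integral_add,
      intervalIntegral.integral_const_mul, intervalIntegral.integral_const_mul] at key
    · unfold Ik
      linarith
    all_goals apply Continuous.intervalIntegrable; fun_prop
  · intro φ
    have h := ((hasDerivAt_sin φ).mul (hasDerivAt_cos φ)).div (D_der hz φ) (D_pos hz φ).ne'
    refine h.congr_deriv ?_
    have e1 := D_pos hz φ
    have e2 := D_sq hz φ
    simp only [Pi.mul_apply]
    generalize √(z + sin φ ^ 2) = Δ at *
    field_simp
    have e3 : cos φ ^ 2 = 1 - sin φ ^ 2 := by linarith [sin_sq_add_cos_sq φ]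
    have e4 : sin φ ^ 2 = Δ ^ 2 - z := by linarith
    rw [e3] 
    simp only [e4, mul_zero, pow_zero, mul_one]
    ring

lemma Ik_rec (k : ℕ) {z : ℝ} (hz : 0 < z) :
    Ik (k + 2) z = (2 * k + 2) / (2 * k + 3) * (1 - z) * Ik (k + 1) z
      + (2 * k + 1) / (2 * k + 3) * z * Ik k z := by
  have c0 := Ik_cont k hz
  have c1 := Ik_cont (k+1) hz
  have c3 := Ik_cont (k+2) hz
  have key := int_zero (f := fun φ => sin φ ^ (2 * k + 1) * cos φ * √(z + sin φ ^ 2))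
    (f' := fun φ => (2 * k + 2) * (1 - z) * (sin φ ^ (2 * (k+1)) / √(z + sin φ ^ 2))
      + (2 * k + 1) * z * (sin φ ^ (2 * k) / √(z + sin φ ^ 2))
      - (2 * k + 3) * (sin φ ^ (2 * (k+2)) / √(z + sin φ ^ 2)))
      ?_ (by fun_prop) (by simp) (by simp)
  · rw [intervalIntegral.integral_sub, intervalIntegral.integral_add,
      intervalIntegral.integral_const_mul, intervalIntegral.integral_const_mul, intervalIntegral.integral_const_mul] at key
    · unfold Ik
      field_simp
      linarith
    all_goals apply Continuous.intervalIntegrable; fun_prop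
  · intro φ
    have h := (((hasDerivAt_sin φ).pow (2*k+1)).mul (hasDerivAt_cos φ)).mul (D_der hz φ)
    refine h.congr_deriv ?_
    have e1 := D_pos hz φ
    have e2 := D_sq hz φ
    simp only [Pi.mul_apply, Pi.pow_apply]
    generalize √(z + sin φ ^ 2) = Δ at *
    field_simp
    have e3 : cos φ ^ 2 = 1 - sin φ ^ 2 := by linarith [sin_sq_add_cos_sq φ]
    rw [e2]
    simp only [Nat.add_sub_cancel]
    push_cast
    ring_nf
    rw [e3]
    ring

lemma LC_I1 : LC (Ik 1) := by
  have h1 := LC_I0.zderiv.amul (g := fun z => -2 * (1 + z)) (fun x _ => by fun_prop)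
  have h2 := LC_I0.amul (g := fun z => - z) (fun x _ => by fun_prop)
  refine (h1.add h2).congr fun z hz => ?_
  rw [I0_deriv hz]
  have := I1_eq hz
  linarith

lemma LC_Ik (k : ℕ) : LC (Ik k) ∧ LC (Ik (k+1)) := by
  induction k with
  | zero => exact ⟨LC_I0, LC_I1⟩
  | succ k ih =>
    refine ⟨ih.2, ?_⟩
    have h1 := ih.2.amul (g := fun z => (2 * (k:ℝ) + 2) / (2 * k + 3) * (1 - z)) (fun x _ => by fun_prop)
    have h2 := ih.1.amul (g := fun z => (2 * (k:ℝ) + 1) / (2 * k + 3) * z) (fun x _ => by fun_prop)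
    exact (h1.add h2).congr fun z hz => Ik_rec k hz

noncomputable def Jk (k : ℕ) (z : ℝ) : ℝ :=
  ∫ φ in (0:ℝ)..(π/2), sin φ ^ (2 * k + 2) / √(z + sin φ ^ 2) ^ 3

lemma Jk_cont (k : ℕ) {z : ℝ} (hz : 0 < z) : Continuous (fun φ => sin φ ^ (2 * k + 2) / √(z + sin φ ^ 2) ^ 3) :=
  Continuous.div (by fun_prop) (by fun_prop) (fun φ => by have := D_pos hz φ; positivity)

lemma J_succ (k : ℕ) {z : ℝ} (hz : 0 < z) : Jk (k+1) z = Ik (k+1) z - z * Jk k z := by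
  unfold Jk Ik
  rw [← intervalIntegral.integral_const_mul, ← intervalIntegral.integral_sub]
  · congr 1
    ext φ
    have e1 := D_pos hz φ
    have e2 := D_sq hz φ
    generalize √(z + sin φ ^ 2) = Δ at *
    field_simp
    have e4 : z = Δ ^ 2 - sin φ ^ 2 := by linarith
    rw [e4]
    ring
  · exact (Ik_cont (k+1) hz).intervalIntegrable _ _
  · exact (continuous_const.mul (Jk_cont k hz)).intervalIntegrable _ _

lemma J_zero {z : ℝ} (hz : 0 < z) : Jk 0 z = (1 + z)⁻¹ * (Ik 0 z - Ik 1 z) := by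
  have h : Jk 0 z = Ik 0 z - z * ∫ φ in (0:ℝ)..(π/2), (√(z + sin φ ^ 2) ^ 3)⁻¹ := by
    unfold Jk Ik
    rw [← intervalIntegral.integral_const_mul, ← intervalIntegral.integral_sub]
    · congr 1
      ext φ
      have e1 := D_pos hz φ
      have e2 := D_sq hz φ
      generalize √(z + sin φ ^ 2) = Δ at *
      field_simp
      have e4 : z = Δ ^ 2 - sin φ ^ 2 := by linarith
      rw [e4]
      ring
    · exact (Ik_cont 0 hz).intervalIntegrable _ _
    · exact (continuous_const.mul (N3_cont hz)).intervalIntegrable _ _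
  have h2 := I1_eq hz
  rw [h]
  generalize (∫ φ in (0:ℝ)..(π/2), (√(z + sin φ ^ 2) ^ 3)⁻¹) = N at *
  field_simp
  linarith

lemma LC_Jk (k : ℕ) : LC (Jk k) := by
  induction k with
  | zero =>
    have hinv : AnalyticOnNhd ℝ (fun z : ℝ => (1 + z)⁻¹) (Set.Ici 0) := by
      intro z hz
      have hz' : (0:ℝ) ≤ z := hz
      have : AnalyticAt ℝ (fun z : ℝ => 1 + z) z := by fun_prop
      exact this.inv (by positivity)
    have h2 := LC_I1.amul (g := fun z => -1) (fun x _ => by fun_prop)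
    refine ((LC_I0.add h2).amul hinv).congr fun z hz => ?_
    rw [J_zero hz]; ring
  | succ k ih =>
    have h2 := ih.amul (g := fun z => -z) (fun x _ => by fun_prop)
    refine ((LC_Ik k).2.add h2).congr fun z hz => ?_
    rw [J_succ k hz]; ring

lemma LC_poly (p : Polynomial ℝ) : LC (fun z =>
    ∫ φ in (0:ℝ)..(π/2), p.eval (sin φ ^ 2) * (sin φ ^ 2 / √(z + sin φ ^ 2) ^ 3)) := by
  induction p using Polynomial.induction_on' with
  | add p q hp hq =>
    refine (hp.add hq).congr fun z hz => ?_
    rw [← intervalIntegral.integral_add]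
    · congr 1
      ext φ
      rw [Polynomial.eval_add]; ring
    all_goals
      have := Jk_cont 0 hz
      simp only [mul_zero, zero_add] at this
      exact ((Polynomial.continuous _).comp (by fun_prop : Continuous fun φ => sin φ ^ 2)).mul this |>.intervalIntegrable _ _
  | monomial k a =>
    refine ((LC_Jk k).amul (g := fun _ => a) (fun x _ => by fun_prop)).congr fun z hz => ?_
    unfold Jk
    rw [← intervalIntegral.integral_const_mul]
    congr 1
    ext φ
    rw [Polynomial.eval_monomial]
    ring

lemma coneKernel_eq (α t θ : ℝ) :
    coneKernel α t θ 1 0 = sin α * cos α * (1 - cos θ) /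
      √((t - 1) ^ 2 + 2 * sin α ^ 2 * t * (1 - cos θ)) ^ 3 := by
  have hs := sin_sq_add_cos_sq θ
  have ha := sin_sq_add_cos_sq α
  have h1 : (inner ℝ (coneParam α t θ - coneParam α 1 0) (coneNormal α θ) : ℝ)
      = sin α * cos α * (1 - cos θ) := by
    simp [coneParam, coneNormal, PiLp.inner_apply, Fin.sum_univ_three]
    have : sin θ ^ 2 = 1 - cos θ ^ 2 := by linarith
    ring_nf
    rw [this]; ring
  have h2 : ‖coneParam α 1 0 - coneParam α t θ‖
      = √((t - 1) ^ 2 + 2 * sin α ^ 2 * t * (1 - cos θ)) := by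
    rw [EuclideanSpace.norm_eq]
    congr 1
    simp [coneParam, Fin.sum_univ_three]
    have e1 : sin θ ^ 2 = 1 - cos θ ^ 2 := by linarith
    have e2 : cos α ^ 2 = 1 - sin α ^ 2 := by linarith
    ring_nf
    rw [e1, e2]; ring
  unfold coneKernel
  rw [h1, h2]

lemma modal_eq (α t : ℝ) (n : ℤ) (hs : 0 < sin α) (ht : 0 < t) (ht1 : t ≠ 1) :
    modalKernel α n t 1 = ((4 * sin α * cos α / π / √(4 * sin α ^ 2 * t) ^ 3 *
      ∫ φ in (0:ℝ)..(π/2), ((Polynomial.Chebyshev.T ℝ n).comp (1 - 2 * Polynomial.X)).eval (sin φ ^ 2) *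
        (sin φ ^ 2 / √((t - 1) ^ 2 / (4 * sin α ^ 2 * t) + sin φ ^ 2) ^ 3) : ℝ) : ℂ) := by
  set w := 4 * sin α ^ 2 * t with hw
  have hw0 : 0 < w := by positivity
  have htt : 0 < (t - 1) ^ 2 := by
    have : t - 1 ≠ 0 := sub_ne_zero.2 ht1
    positivity
  set z := (t - 1) ^ 2 / w with hz
  have hz0 : 0 < z := by positivity
  have hpi := pi_pos
  set k : ℝ → ℝ := fun θ => coneKernel α t θ 1 0 with hk
  have hkc : Continuous k := by
    simp only [hk, coneKernel_eq]
    refine Continuous.div (by fun_prop) (by fun_prop) (fun θ => ?_)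
    have : 0 ≤ 1 - cos θ := by linarith [cos_le_one θ]
    positivity
  have hk2 : ∀ φ, k (2 * φ) = 2 * sin α * cos α / √w ^ 3 * (sin φ ^ 2 / √(z + sin φ ^ 2) ^ 3) := by
    intro φ
    have e1 : 1 - cos (2 * φ) = 2 * sin φ ^ 2 := by rw [cos_two_mul, cos_sq']; ring
    have e2 : (t - 1) ^ 2 + 2 * sin α ^ 2 * t * (2 * sin φ ^ 2) = w * (z + sin φ ^ 2) := by
      rw [mul_add, hz, mul_div_cancel₀ _ hw0.ne', hw]; ring
    simp only [hk, coneKernel_eq]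
    rw [e1, e2, sqrt_mul hw0.le, mul_pow]
    ring
  have hks : ∀ φ, k (2 * (π - φ)) = k (2 * φ) := by
    intro φ
    rw [hk2, hk2, sin_pi_sub]
  set H : ℝ → ℂ := fun θ => Complex.exp (-Complex.I * (n : ℂ) * (θ : ℂ)) * (k θ : ℂ) with hH
  have hHc : Continuous H := by fun_prop
  have s1 : ∫ θ in (0:ℝ)..(2 * π), H θ = 2 * ∫ φ in (0:ℝ)..π, H (2 * φ) := by
    rw [intervalIntegral.integral_comp_mul_left H two_ne_zero]
    simp
  have s2 : ∫ φ in (0:ℝ)..π, H (2 * φ) = ∫ φ in (0:ℝ)..(π/2), (H (2 * φ) + H (2 * (π - φ))) := by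
    rw [intervalIntegral.integral_add]
    · rw [intervalIntegral.integral_comp_sub_left (fun φ => H (2 * φ)) π]
      rw [sub_zero, sub_half, intervalIntegral.integral_add_adjacent_intervals]
      all_goals exact Continuous.intervalIntegrable (by fun_prop) _ _
    all_goals exact Continuous.intervalIntegrable (by fun_prop) _ _
  have s3 : ∀ φ, H (2 * φ) + H (2 * (π - φ)) = ((4 * sin α * cos α / √w ^ 3 *
      (((Polynomial.Chebyshev.T ℝ n).comp (1 - 2 * Polynomial.X)).eval (sin φ ^ 2) *
        (sin φ ^ 2 / √(z + sin φ ^ 2) ^ 3)) : ℝ) : ℂ) := by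
    intro φ
    have e1 : ((Polynomial.Chebyshev.T ℝ n).comp (1 - 2 * Polynomial.X)).eval (sin φ ^ 2)
        = cos (n * (2 * φ)) := by
      rw [← Polynomial.Chebyshev.T_real_cos, Polynomial.eval_comp]
      congr 1
      simp [cos_two_mul, cos_sq']
      ring
    have e2 : Complex.exp (-Complex.I * (n : ℂ) * ((2 * (π - φ) : ℝ) : ℂ))
        = Complex.exp (Complex.I * (n : ℂ) * ((2 * φ : ℝ) : ℂ)) := by
      have : -Complex.I * (n : ℂ) * ((2 * (π - φ) : ℝ) : ℂ) =
        Complex.I * (n : ℂ) * ((2 * φ : ℝ) : ℂ) - n * (2 * π * Complex.I) := by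
        push_cast; ring
      rw [this, Complex.exp_sub, Complex.exp_int_mul_two_pi_mul_I, div_one]
    have e3 : Complex.exp (-Complex.I * (n : ℂ) * ((2 * φ : ℝ) : ℂ)) +
        Complex.exp (Complex.I * (n : ℂ) * ((2 * φ : ℝ) : ℂ)) = ((2 * cos (n * (2 * φ)) : ℝ) : ℂ) := by
      push_cast
      rw [Complex.cos]
      ring_nf
    simp only [hH]
    rw [hks, e2, ← add_mul, e3, e1, hk2, ← Complex.ofReal_mul]
    congr 1
    ring
  unfold modalKernel
  change _ * ∫ θ in (0:ℝ)..(2 * π), H θ = _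
  rw [s1, s2]
  simp only [s3]
  rw [intervalIntegral.integral_ofReal, intervalIntegral.integral_const_mul]
  push_cast
  field_simp

theorem modalKernel_log_singularity (α : ℝ) (hα0 : 0 < α) (hαπ : α < π)
    (hα2 : α ≠ π / 2) (n : ℤ) :
    ∃ G F : ℝ → ℝ,
      AnalyticOnNhd ℝ G (Set.Icc (1 / 2) (3 / 2)) ∧
      AnalyticOnNhd ℝ F (Set.Icc (1 / 2) (3 / 2)) ∧
      ∀ t ∈ Set.Icc (1 / 2 : ℝ) (3 / 2), t ≠ 1 →
        modalKernel α n t 1 = ((G t * Real.log |1 - t| + F t : ℝ) : ℂ) := by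
  have hs : 0 < sin α := sin_pos_of_pos_of_lt_pi hα0 hαπ
  obtain ⟨A, B, hA, hB, h⟩ := LC_poly ((Polynomial.Chebyshev.T ℝ n).comp (1 - 2 * Polynomial.X))
  beta_reduce at h
  have hpos : ∀ t ∈ Set.Icc (1 / 2 : ℝ) (3 / 2), 0 < t := fun t ht => by linarith [ht.1]
  have hwp : ∀ t ∈ Set.Icc (1 / 2 : ℝ) (3 / 2), 0 < 4 * sin α ^ 2 * t := fun t ht => by
    have := hpos t ht
    positivity
  have hlog : AnalyticOnNhd ℝ (fun t => log (4 * sin α ^ 2 * t)) (Set.Icc (1 / 2) (3 / 2)) := by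
    intro t ht
    have : AnalyticAt ℝ (fun t => 4 * sin α ^ 2 * t) t := by fun_prop
    exact this.log (hwp t ht)
  have hz : AnalyticOnNhd ℝ (fun t => (t - 1) ^ 2 / (4 * sin α ^ 2 * t)) (Set.Icc (1 / 2) (3 / 2)) := by
    intro t ht
    have h1 : AnalyticAt ℝ (fun t : ℝ => (t - 1) ^ 2) t := by fun_prop
    have h2 : AnalyticAt ℝ (fun t => 4 * sin α ^ 2 * t) t := by fun_prop
    exact h1.div h2 (hwp t ht).ne'
  have hmaps : Set.MapsTo (fun t => (t - 1) ^ 2 / (4 * sin α ^ 2 * t)) (Set.Icc (1 / 2) (3 / 2))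
      (Set.Ici 0) := fun t ht => div_nonneg (sq_nonneg _) (hwp t ht).le
  have hκ : AnalyticOnNhd ℝ (fun t => 4 * sin α * cos α / π *
      exp (-(3/2) * log (4 * sin α ^ 2 * t))) (Set.Icc (1 / 2) (3 / 2)) := fun t ht =>
    analyticAt_const.mul (analyticAt_const.mul (hlog t ht)).rexp
  have hAz := hA.comp hz hmaps
  have hBz := hB.comp hz hmaps
  refine ⟨_, _, hκ.mul ((analyticOnNhd_const (v := (2:ℝ))).mul hAz),
    hκ.mul (hBz.sub (hAz.mul hlog)), fun t ht ht1 => ?_⟩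
  have hw := hwp t ht
  have ht1' : t - 1 ≠ 0 := sub_ne_zero.2 ht1
  rw [modal_eq α t n hs (hpos t ht) ht1, h _ (by positivity)]
  have e1 : √(4 * sin α ^ 2 * t) ^ 3 = (exp (-(3/2) * log (4 * sin α ^ 2 * t)))⁻¹ := by
    rw [← exp_neg, sqrt_eq_rpow, rpow_def_of_pos hw, ← exp_nat_mul]
    congr 1
    push_cast
    ring
  have e2 : log ((t - 1) ^ 2 / (4 * sin α ^ 2 * t)) = 2 * log |1 - t| - log (4 * sin α ^ 2 * t) := by
    rw [log_div (by positivity) hw.ne', log_pow, log_abs, ← log_neg_eq_log (1 - t), neg_sub]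
    push_cast
    ring
  rw [e1, e2]
  congr 1
  simp only [Pi.mul_apply, Pi.sub_apply, Function.comp_apply, div_inv_eq_mul]
  ring
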